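/- Let N ≥ 1, c ∈ ℝ^{N×N}, γ > 0, set ξ_{ij} = e^{−c_{ij}/γ}, and let p ∈ Σ_N have strictly positive entries. Then: (i) the unique minimizer of π ↦ ⟨c,π⟩ + γ E(π) over {π ∈ ℝ_+^{N×N} : π𝟙 = p} is π* = diag(p ⊘ (ξ𝟙)) ξ; and (ii) consequently, the function q ↦ W_γ(p,q) attains its minimum over Σ_N at the unique point q* = (π*)^T𝟙 = ξ^T( p ⊘ (ξ𝟙) ). In particular q* ≠ p in general, so W_γ(p,·) is not minimized at p. -/

import Mathlib

open scoped BigOperators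

noncomputable section

def simplex (N : ℕ) : Set (Fin N → ℝ) :=
  {p | (∀ i, 0 ≤ p i) ∧ ∑ i, p i = 1}

def couplings {N : ℕ} (p q : Fin N → ℝ) : Set (Fin N → Fin N → ℝ) :=
  {π | (∀ i j, 0 ≤ π i j) ∧ (∀ i, ∑ j, π i j = p i) ∧ (∀ j, ∑ i, π i j = q j)}

def entropy {N : ℕ} (π : Fin N → Fin N → ℝ) : ℝ :=
  ∑ i, ∑ j, π i j * (Real.log (π i j) - 1)

def frob {N : ℕ} (c π : Fin N → Fin N → ℝ) : ℝ :=
  ∑ i, ∑ j, c i j * π i j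

def Wreg {N : ℕ} (c : Fin N → Fin N → ℝ) (γ : ℝ) (p q : Fin N → ℝ) : ℝ :=
  sInf ((fun π => frob c π + γ * entropy π) '' couplings p q)

def IsUniqMinOn {α β : Type*} [Preorder β] (F : α → β) (S : Set α) (x : α) : Prop :=
  x ∈ S ∧ (∀ y ∈ S, F x ≤ F y) ∧ ∀ y ∈ S, (∀ z ∈ S, F y ≤ F z) → y = x

lemma aux_pt (x a : ℝ) (hx : 0 ≤ x) (ha : 0 < a) :
    0 ≤ x * (Real.log x - 1) - x * Real.log a + a ∧
    (x * (Real.log x - 1) - x * Real.log a + a ≤ 0 → x = a) := by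
  rcases hx.eq_or_lt with h | h
  · subst h
    simp only [zero_mul, sub_zero, zero_add]
    exact ⟨ha.le, fun h => absurd h (not_le.mpr ha)⟩
  · have hd : 0 < a / x := div_pos ha h
    have e : x * (a / x) = a := by field_simp
    have hl : Real.log (a / x) = Real.log a - Real.log x := Real.log_div ha.ne' h.ne'
    constructor
    · have h1 := Real.log_le_sub_one_of_pos hd
      rw [hl] at h1
      have := mul_le_mul_of_nonneg_left h1 h.le
      rw [mul_sub x (a / x), e] at this
      linarith
    · intro h0
      by_contra hne
      have hne' : a / x ≠ 1 := by
        intro h2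
        rw [h2] at e
        apply hne
        linarith
      have h1 := Real.log_lt_sub_one_of_pos hd hne'
      rw [hl] at h1
      have := mul_lt_mul_of_pos_left h1 h
      rw [mul_sub x (a / x), e] at this
      linarith

lemma aux_cont {N : ℕ} (c : Fin N → Fin N → ℝ) (γ : ℝ) :
    Continuous (fun π : Fin N → Fin N → ℝ => frob c π + γ * entropy π) := by
  unfold frob entropy
  have h : Continuous (fun x : ℝ => x * (Real.log x - 1)) := by
    have : (fun x : ℝ => x * (Real.log x - 1)) = fun x => x * Real.log x - x := by
      funext x; ring
    rw [this]
    exact Real.continuous_mul_log.sub continuous_id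
  have h2 : ∀ i j, Continuous (fun π : Fin N → Fin N → ℝ => π i j * (Real.log (π i j) - 1)) :=
    fun i j => h.comp (by fun_prop : Continuous (fun π : Fin N → Fin N → ℝ => π i j))
  refine Continuous.add (by fun_prop) (continuous_const.mul ?_)
  exact continuous_finsetSum _ fun i _ => continuous_finsetSum _ fun j _ => h2 i j

lemma aux_compact {N : ℕ} (p q : Fin N → ℝ) : IsCompact (couplings p q) := by
  have hK : IsCompact (Set.pi Set.univ fun i : Fin N => Set.pi Set.univ fun _ : Fin N =>
      Set.Icc (0 : ℝ) (p i)) :=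
    isCompact_univ_pi fun i => isCompact_univ_pi fun _ => isCompact_Icc
  refine hK.of_isClosed_subset ?_ ?_
  · have : couplings p q = (⋂ i, ⋂ j, {π : Fin N → Fin N → ℝ | 0 ≤ π i j}) ∩
        ((⋂ i, {π : Fin N → Fin N → ℝ | ∑ j, π i j = p i}) ∩
          ⋂ j, {π : Fin N → Fin N → ℝ | ∑ i, π i j = q j}) := by
      ext π; simp [couplings]
    rw [this]
    refine IsClosed.inter ?_ (IsClosed.inter ?_ ?_)
    · exact isClosed_iInter fun i => isClosed_iInter fun j =>
        isClosed_le continuous_const (by fun_prop)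
    · exact isClosed_iInter fun i => isClosed_eq (by fun_prop) continuous_const
    · exact isClosed_iInter fun i => isClosed_eq (by fun_prop) continuous_const
  · rintro π ⟨h0, h1, -⟩ i - j -
    refine ⟨h0 i j, ?_⟩
    rw [← h1 i]
    exact Finset.single_le_sum (f := fun j => π i j) (fun j _ => h0 i j) (Finset.mem_univ j)

lemma aux_attain {N : ℕ} (c : Fin N → Fin N → ℝ) (γ : ℝ) (p q : Fin N → ℝ)
    (hp : p ∈ simplex N) (hq : q ∈ simplex N) :
    ∃ π ∈ couplings p q, Wreg c γ p q = frob c π + γ * entropy π := by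
  have hne : (couplings p q).Nonempty := by
    refine ⟨fun i j => p i * q j, fun i j => mul_nonneg (hp.1 i) (hq.1 j), fun i => ?_, fun j => ?_⟩
    · rw [← Finset.mul_sum, hq.2, mul_one]
    · rw [← Finset.sum_mul, hp.2, one_mul]
  obtain ⟨π, h, h2⟩ := (aux_compact p q).exists_sInf_image_eq hne (aux_cont c γ).continuousOn
  exact ⟨π, h, h2⟩

lemma aux_decomp {N : ℕ} (c : Fin N → Fin N → ℝ) (γ : ℝ) (hγ : 0 < γ)
    (ξ : Fin N → Fin N → ℝ) (hξ : ∀ i j, ξ i j = Real.exp (-(c i j) / γ))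
    (p u : Fin N → ℝ) (hu : ∀ i, 0 < u i) (π : Fin N → Fin N → ℝ)
    (h1 : ∀ i, ∑ j, π i j = p i) :
    frob c π + γ * entropy π =
      γ * (∑ i, ∑ j, (π i j * (Real.log (π i j) - 1) - π i j * Real.log (u i * ξ i j)
        + u i * ξ i j)) + γ * (∑ i, (p i * Real.log (u i) - ∑ j, u i * ξ i j)) := by
  have hc : ∀ i j, c i j = -γ * Real.log (ξ i j) := by
    intro i j
    rw [hξ, Real.log_exp]
    field_simp
  have hl : ∀ i j, Real.log (u i * ξ i j) = Real.log (u i) + Real.log (ξ i j) := by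
    intro i j
    exact Real.log_mul (hu i).ne' (by rw [hξ]; exact (Real.exp_pos _).ne')
  unfold frob entropy
  rw [Finset.mul_sum, Finset.mul_sum, Finset.mul_sum, ← Finset.sum_add_distrib,
    ← Finset.sum_add_distrib]
  refine Finset.sum_congr rfl fun i _ => ?_
  rw [← h1 i, Finset.sum_mul, ← Finset.sum_sub_distrib, Finset.mul_sum, Finset.mul_sum,
    Finset.mul_sum, ← Finset.sum_add_distrib, ← Finset.sum_add_distrib]
  refine Finset.sum_congr rfl fun j _ => ?_
  rw [hl, hc]
  ring

/-- With `ξ = e^{-c/γ}` and `p ∈ Σ_N` with positive entries: (i) the unique minimizer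
of `π ↦ ⟨c,π⟩ + γE(π)` over nonnegative matrices with row sums `p` is
`π* = diag(p ⊘ ξ𝟙) ξ`; (ii) consequently `q ↦ W_γ(p,q)` attains its minimum over
`Σ_N` at the unique point `q* = ξᵀ(p ⊘ ξ𝟙)`. -/
theorem Wreg_not_minimized_at_diagonal {N : ℕ} (hN : 1 ≤ N)
    (c : Fin N → Fin N → ℝ) (γ : ℝ) (hγ : 0 < γ)
    (ξ : Fin N → Fin N → ℝ) (hξ : ∀ i j, ξ i j = Real.exp (-(c i j) / γ))
    (p : Fin N → ℝ) (hp : p ∈ simplex N) (hppos : ∀ i, 0 < p i) :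
    IsUniqMinOn (fun π => frob c π + γ * entropy π)
      {π : Fin N → Fin N → ℝ | (∀ i j, 0 ≤ π i j) ∧ ∀ i, ∑ j, π i j = p i}
      (fun i j => p i / (∑ k, ξ i k) * ξ i j) ∧
    IsUniqMinOn (fun q => Wreg c γ p q) (simplex N)
      (fun j => ∑ i, ξ i j * (p i / ∑ k, ξ i k)) := by
  classical
  have hξpos : ∀ i j, 0 < ξ i j := fun i j => by rw [hξ]; exact Real.exp_pos _
  have hs : ∀ i, 0 < ∑ k, ξ i k := fun i =>
    Finset.sum_pos (fun k _ => hξpos i k) ⟨i, Finset.mem_univ i⟩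
  have hu : ∀ i, 0 < p i / ∑ k, ξ i k := fun i => div_pos (hppos i) (hs i)
  have hrow : ∀ i, ∑ j, p i / (∑ k, ξ i k) * ξ i j = p i := by
    intro i
    rw [← Finset.mul_sum]
    exact div_mul_cancel₀ _ (hs i).ne'
  have hdec := aux_decomp c γ hγ ξ hξ p (fun i => p i / ∑ k, ξ i k) hu
  set P : Fin N → Fin N → ℝ := fun i j => p i / (∑ k, ξ i k) * ξ i j with hP
  have hPpos : ∀ i j, 0 < P i j := fun i j => mul_pos (hu i) (hξpos i j)
  have hPD : ∑ i, ∑ j, (P i j * (Real.log (P i j) - 1) - P i j * Real.log (P i j) + P i j) = 0 :=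
    Finset.sum_eq_zero fun i _ => Finset.sum_eq_zero fun j _ => by ring
  have hFP := hdec P hrow
  have hmin : ∀ π : Fin N → Fin N → ℝ, (∀ i j, 0 ≤ π i j) → (∀ i, ∑ j, π i j = p i) →
      frob c P + γ * entropy P ≤ frob c π + γ * entropy π ∧
      (frob c π + γ * entropy π ≤ frob c P + γ * entropy P → π = P) := by
    intro π h0 h1
    have hFπ := hdec π h1
    change _ = γ * (∑ i, ∑ j, (π i j * (Real.log (π i j) - 1) - π i j * Real.log (P i j)
      + P i j)) + _ at hFπ
    change _ = γ * (∑ i, ∑ j, (P i j * (Real.log (P i j) - 1) - P i j * Real.log (P i j)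
      + P i j)) + _ at hFP
    rw [hPD] at hFP
    have hnn := fun i j => (aux_pt (π i j) (P i j) (h0 i j) (hPpos i j)).1
    have hD : 0 ≤ ∑ i, ∑ j, (π i j * (Real.log (π i j) - 1) - π i j * Real.log (P i j)
      + P i j) := Finset.sum_nonneg fun i _ => Finset.sum_nonneg fun j _ => hnn i j
    rw [hFπ, hFP]
    constructor
    · have := mul_nonneg hγ.le hD
      linarith
    · intro hle
      have hD0 : ∑ i, ∑ j, (π i j * (Real.log (π i j) - 1) - π i j * Real.log (P i j)
          + P i j) ≤ 0 := by
        by_contra hcon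
        have := mul_pos hγ (not_le.mp hcon)
        linarith
      have hz := (Finset.sum_eq_zero_iff_of_nonneg
        (fun i _ => Finset.sum_nonneg fun j _ => hnn i j)).1 (le_antisymm hD0 hD)
      funext i j
      have hz2 := (Finset.sum_eq_zero_iff_of_nonneg (fun j _ => hnn i j)).1
        (hz i (Finset.mem_univ i)) j (Finset.mem_univ j)
      exact (aux_pt (π i j) (P i j) (h0 i j) (hPpos i j)).2 hz2.le
  have hcol : ∀ j, ∑ i, P i j = ∑ i, ξ i j * (p i / ∑ k, ξ i k) :=
    fun j => Finset.sum_congr rfl fun i _ => mul_comm _ _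
  have hq : (fun j => ∑ i, ξ i j * (p i / ∑ k, ξ i k)) ∈ simplex N := by
    refine ⟨fun j => Finset.sum_nonneg fun i _ => (mul_pos (hξpos i j) (hu i)).le, ?_⟩
    simp only [← hcol]
    rw [Finset.sum_comm, ← hp.2]
    exact Finset.sum_congr rfl fun i _ => hrow i
  have hWq : Wreg c γ p (fun j => ∑ i, ξ i j * (p i / ∑ k, ξ i k)) ≤
      frob c P + γ * entropy P := by
    refine csInf_le ?_ ⟨P, ⟨fun i j => (hPpos i j).le, hrow, hcol⟩, rfl⟩
    refine ⟨frob c P + γ * entropy P, ?_⟩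
    rintro _ ⟨π, h, rfl⟩
    exact (hmin π h.1 h.2.1).1
  refine ⟨⟨⟨fun i j => (hPpos i j).le, hrow⟩, fun π h => (hmin π h.1 h.2).1, fun π h hm =>
    (hmin π h.1 h.2).2 (hm P ⟨fun i j => (hPpos i j).le, hrow⟩)⟩, hq, ?_, ?_⟩
  · intro y hy
    obtain ⟨π, h, hW⟩ := aux_attain c γ p y hp hy
    change Wreg c γ p _ ≤ Wreg c γ p y
    rw [hW]
    exact hWq.trans (hmin π h.1 h.2.1).1
  · intro y hy hm
    obtain ⟨π, h, hW⟩ := aux_attain c γ p y hp hy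
    have h3 : Wreg c γ p y ≤ _ := (hm _ hq).trans hWq
    rw [hW] at h3
    have h4 := (hmin π h.1 h.2.1).2 h3
    funext j
    rw [← h.2.2 j, h4]
    exact hcol j
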